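/- arXiv:2602.01882 — 2 statements merged into one kernel-verified Lean document; each statement's English description precedes it below -/
import Mathlib

section
/- Let q ≥ 0, r ≥ 1, and x ≥ 1 be integers, let F be a finite set with |F| ≥ q(r−1)+x, and let c : F → 𝒫({1,…,q}) assign to each element of F a set of colours. Then there exist a set I ⊆ {1,…,q} and a subset F' ⊆ F with |F'| ≥ |I|·(r−1)+x such that c(s) ⊆ I for every s ∈ F' and, for every i ∈ I, at least r elements s ∈ F' satisfy i ∈ c(s). -/
/-!
Call a palette `I` good if the elements all of whose colours lie in `I` number at least
`|I|(r-1) + x`. If a colour `i ∈ I` of a good palette is carried by at most `r - 1` of these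
elements, discarding `i` together with them lowers both sides in step, so the palette without `i`
is still good. Hence in an inclusion-minimal good palette every colour is carried at least `r`
times.
-/

open Finset

section Palette

variable {α κ : Type*} [DecidableEq κ] {F : Finset α} {c : α → Finset κ} {t : κ → ℕ} {x : ℕ}
  {I : Finset κ} {i : κ}

/-- A good palette: the elements of `F` coloured only from `I` outnumber the combined discarding
budget of `I` by at least `x`. Discarding the colour `i` may cost up to `t i` elements; with
`t i = r - 1`, a colour is worth discarding when fewer than `r` elements carry it. -/
def IsGoodPalette (F : Finset α) (c : α → Finset κ) (t : κ → ℕ) (x : ℕ) (I : Finset κ) : Prop :=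
  ∑ i ∈ I, t i + x ≤ #{s ∈ F | c s ⊆ I}

theorem card_filter_subset_eq_add_erase (F : Finset α) (c : α → Finset κ) (I : Finset κ) (i : κ) :
    #{s ∈ F | c s ⊆ I} = #{s ∈ F | c s ⊆ I ∧ i ∈ c s} + #{s ∈ F | c s ⊆ I.erase i} := by
  simp only [subset_erase, ← filter_filter]
  exact (card_filter_add_card_filter_not _).symm

theorem IsGoodPalette.erase (hI : IsGoodPalette F c t x I) (hi : i ∈ I)
    (hrare : #{s ∈ F | c s ⊆ I ∧ i ∈ c s} ≤ t i) : IsGoodPalette F c t x (I.erase i) := by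
  have hsplit := card_filter_subset_eq_add_erase F c I i
  have hbudget := add_sum_erase I t hi
  unfold IsGoodPalette at hI ⊢
  lia

theorem IsGoodPalette.lt_card_of_minimal (hI : Minimal (IsGoodPalette F c t x) I) (hi : i ∈ I) :
    t i < #{s ∈ F | c s ⊆ I ∧ i ∈ c s} := by
  by_contra! hrare
  exact hI.not_prop_of_lt (erase_ssubset hi) (hI.prop.erase hi hrare)

theorem sorting_lemma_general {J : Finset κ} (hc : ∀ s ∈ F, c s ⊆ J)
    (hF : ∑ i ∈ J, t i + x ≤ #F) :
    ∃ I ⊆ J, ∃ F' ⊆ F, ∑ i ∈ I, t i + x ≤ #F' ∧ (∀ s ∈ F', c s ⊆ I) ∧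
      ∀ i ∈ I, t i < #{s ∈ F' | i ∈ c s} := by
  have hJ : IsGoodPalette F c t x J := by rwa [IsGoodPalette, filter_true_of_mem hc]
  obtain ⟨I, hIJ, hI⟩ := exists_minimal_le_of_wellFoundedLT _ J hJ
  refine ⟨I, hIJ, {s ∈ F | c s ⊆ I}, filter_subset _ _, hI.prop,
    fun s hs ↦ (mem_filter.mp hs).2, fun i hi ↦ ?_⟩
  rw [filter_filter]
  exact IsGoodPalette.lt_card_of_minimal hI hi

end Palette

/-- **Sorting lemma.**  Let `q ≥ 0`, `r ≥ 1`, `x ≥ 1`, let `F` be a finite set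
with `|F| ≥ q(r−1)+x` and let `c` assign to each element of `F` a set of
colours from `{1,…,q}` (modelled as `Fin q`).  Then there are `I ⊆ {1,…,q}`
and `F' ⊆ F` with `|F'| ≥ |I|(r−1)+x` such that `c s ⊆ I` for every `s ∈ F'`
and each `i ∈ I` lies in `c s` for at least `r` elements `s ∈ F'`. -/
theorem sorting_lemma (q r x : ℕ) (hr : 1 ≤ r) (hx : 1 ≤ x)
    {α : Type} [DecidableEq α] (F : Finset α)
    (hF : q * (r - 1) + x ≤ F.card)
    (c : α → Finset (Fin q)) :
    ∃ (I : Finset (Fin q)) (F' : Finset α), F' ⊆ F ∧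
      I.card * (r - 1) + x ≤ F'.card ∧
      (∀ s ∈ F', c s ⊆ I) ∧
      (∀ i ∈ I, r ≤ (F'.filter (fun s => i ∈ c s)).card) := by
  obtain ⟨I, -, F', hF', hcard, hsub, hmany⟩ := sorting_lemma_general (t := fun _ ↦ r - 1) (x := x)
    (fun s _ ↦ subset_univ (c s)) (by simpa using hF)
  exact ⟨I, F', hF', by simpa using hcard, hsub, fun i hi ↦ Nat.le_of_pred_lt (hmany i hi)⟩
end

section
/- Let q ≥ 0, r ≥ 1, and x ≥ 1 be integers, let F be a finite set with |F| ≥ q(r−1)+x, and for each s ∈ F let c_s(0) ⊇ c_s(1) ⊇ … ⊇ c_s(q+1) be a decreasing chain of subsets of {1,…,q}. Then there exist an index j with 0 ≤ j ≤ q, a set I ⊆ {1,…,q}, and a subset F' ⊆ F with |F'| ≥ |I|·(r−1)+x such that c_s(j) ⊆ I for every s ∈ F' and, for every i ∈ I, at least r elements s ∈ F' satisfy i ∈ c_s(j+1). -/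
/-!
Start from the full palette and all of `F`. As long as some colour `i` of the current palette is
carried at the next level by at most `r - 1` of the current elements, discard `i` together with
those elements and advance the level. The survivors do not carry `i` at the new level, and the
chains are decreasing, so the smaller palette still covers them; a round loses one colour and at
most `r - 1` elements, so the cardinality bound survives too. The palette strictly shrinks, hence
the procedure stops.
-/

section Trimming

open scoped Finset

variable {α β : Type*} [DecidableEq β]

theorem sum_erase_add_le_card_filter_not {F : Finset α} {I : Finset β} {d : β → ℕ} {x : ℕ} {i : β}
    (p : α → Prop) [DecidablePred p] (hi : i ∈ I) (hF : ∑ k ∈ I, d k + x ≤ #F)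
    (hrare : #{s ∈ F | p s} ≤ d i) :
    ∑ k ∈ I.erase i, d k + x ≤ #{s ∈ F | ¬ p s} := by
  have hsum : d i + ∑ k ∈ I.erase i, d k = ∑ k ∈ I, d k := Finset.add_sum_erase I d hi
  have hcard : #{s ∈ F | p s} + #{s ∈ F | ¬ p s} = #F := Finset.card_filter_add_card_filter_not p
  lia

/-- `d i` plays the role of `r - 1`; `j` is the number of discarded colours. -/
theorem sorting_trimming_lemma_general (d : β → ℕ) (x : ℕ) (P : Finset β) (F : Finset α)
    (hF : ∑ i ∈ P, d i + x ≤ #F) (c : α → ℕ → Finset β) (hP : ∀ s ∈ F, c s 0 ⊆ P)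
    (hchain : ∀ s ∈ F, ∀ j < #P, c s (j + 1) ⊆ c s j) :
    ∃ (j : ℕ) (I : Finset β) (F' : Finset α), I ⊆ P ∧ j + #I = #P ∧ F' ⊆ F ∧
      ∑ i ∈ I, d i + x ≤ #F' ∧ (∀ s ∈ F', c s j ⊆ I) ∧
        ∀ i ∈ I, d i < #{s ∈ F' | i ∈ c s (j + 1)} := by
  induction P using Finset.strongInduction generalizing F c with
  | H P ih =>
    by_cases hfreq : ∀ i ∈ P, d i < #{s ∈ F | i ∈ c s 1}
    · exact ⟨0, P, F, subset_rfl, zero_add _, subset_rfl, hF, hP, hfreq⟩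
    push Not at hfreq
    obtain ⟨i, hi, hrare⟩ := hfreq
    have hcard : #(P.erase i) + 1 = #P := Finset.card_erase_add_one hi
    have hcover : ∀ s ∈ F.filter (i ∉ c · 1), c s 1 ⊆ P.erase i := by
      intro s hs
      obtain ⟨hsF, his⟩ := Finset.mem_filter.1 hs
      have hsP : c s 1 ⊆ P := (hchain s hsF 0 (by lia)).trans (hP s hsF)
      exact Finset.subset_erase.2 ⟨hsP, his⟩
    obtain ⟨j, I, F', hI, hj, hF', hbound, hsub, hmany⟩ :=
      ih (P.erase i) (Finset.erase_ssubset hi) (F.filter (i ∉ c · 1))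
        (sum_erase_add_le_card_filter_not (i ∈ c · 1) hi hF hrare) (fun s j ↦ c s (j + 1)) hcover
        (fun s hs j hj ↦ hchain s (Finset.mem_of_mem_filter s hs) (j + 1) (by lia))
    exact ⟨j + 1, I, F', hI.trans (Finset.erase_subset i P), by lia,
      hF'.trans (Finset.filter_subset _ F), hbound, hsub, hmany⟩

end Trimming

/-- **Sorting-and-trimming lemma.**  Let `q ≥ 0`, `r ≥ 1`, `x ≥ 1`, let `F` be
a finite set with `|F| ≥ q(r−1)+x` and, for each `s ∈ F`, let
`c s 0 ⊇ c s 1 ⊇ … ⊇ c s (q+1)` be a decreasing chain of subsets of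
`{1,…,q}` (modelled as `Fin q`).  Then there are an index `j ≤ q`, a set
`I ⊆ {1,…,q}` and `F' ⊆ F` with `|F'| ≥ |I|(r−1)+x` such that `c s j ⊆ I` for
every `s ∈ F'` and each `i ∈ I` lies in `c s (j+1)` for at least `r` elements
`s ∈ F'`. -/
theorem sorting_trimming_lemma (q r x : ℕ) (hr : 1 ≤ r) (hx : 1 ≤ x)
    {α : Type} [DecidableEq α] (F : Finset α)
    (hF : q * (r - 1) + x ≤ F.card)
    (c : α → ℕ → Finset (Fin q))
    (hchain : ∀ s, ∀ j ≤ q, c s (j + 1) ⊆ c s j) :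
    ∃ j : ℕ, j ≤ q ∧
      ∃ (I : Finset (Fin q)) (F' : Finset α), F' ⊆ F ∧
        I.card * (r - 1) + x ≤ F'.card ∧
        (∀ s ∈ F', c s j ⊆ I) ∧
        (∀ i ∈ I, r ≤ (F'.filter (fun s => i ∈ c s (j + 1))).card) := by
  obtain ⟨j, I, F', -, hj, hF', hbound, hsub, hmany⟩ :=
    sorting_trimming_lemma_general (fun _ ↦ r - 1) x Finset.univ F (by simpa using hF) c
      (fun s _ ↦ Finset.subset_univ _) (fun s _ j hj ↦ hchain s j (by simpa using hj.le))
  have hjq : j ≤ q := by simpa using Nat.le.intro hj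
  exact ⟨j, hjq, I, F', hF', by simpa using hbound, hsub,
    fun i hi ↦ Nat.le_of_pred_lt (hmany i hi)⟩
end
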